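/- The series ∑_{k=0}^∞ c(k)/(k + 1/2)⁴ converges and equals π·(2ζ(3) + ζ(2)·log 4 + (1/6)(log 4)³), i.e. the quantity γ̃₃ := (1/π)∑_{k=0}^∞ c(k)/(k + 1/2)⁴ equals 2ζ(3) + ζ(2)·log 4 + (1/6)(log 4)³. -/

import Mathlib

/-!
Put `F p s = ∑ c(k)/(k+s)^p` for `s > 0`. Then `F 1` is the Beta function `B(s, 1/2)`, and the series
in question is `F 4 (1/2)`, that is, `-1/6` times the third derivative of `F 1` at `1/2`.

The Gamma function is not needed. The recurrence for `c` makes a sum telescope and yields the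
functional equation `s F 1 s = (s + 1/2) F 1 (s + 1)` (`F_one_step`). Its logarithmic derivative
(`ratio_step`) expresses `F 2 s / F 1 s - F 2 (s+1) / F 1 (s+1)` as `1/s - 1/(s+1/2)`. Since
`0 ≤ F 2 s / F 1 s ≤ 1/s`, iterating it gives `F 2 = F 1 * H 1`, where
`H p s = ∑ (1/(n+s)^p - 1/(n+s+1/2)^p)` (`hasSum_H_one`, `F_two_eq`). Both families are differentiated
termwise, with `(F p)' = -p F (p+1)` and `(H p)' = -p H (p+1)` (`hasDerivAt_series`), so
differentiating `F 2 = F 1 * H 1` twice expresses `F 4` through `F 1`, `H 1`, `H 2`, `H 3`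
(`F_four_eq`).

At `s = 1/2`: `F 1 = π` by the Wallis product (`F_one_half`), `H 1 = log 4` by the asymptotics of
harmonic numbers (`H_one_half`), and `H 2 = 2 ζ(2)`, `H 3 = 6 ζ(3)` by separating even and odd
denominators (`H_half`).
-/

/-- `c k = |binom(-1/2, k)| = binom(2k, k) / 4^k`. -/
noncomputable def c (k : ℕ) : ℝ := (Nat.choose (2 * k) k : ℝ) / 4 ^ k

/-- `ζ(n) = ∑_{m=1}^∞ m^{-n}`. -/
noncomputable def zetaVal (n : ℕ) : ℝ := ∑' m : ℕ, 1 / (m + 1 : ℝ) ^ n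

open Filter Topology

/-! ### The coefficients `c k` -/

lemma c_zero : c 0 = 1 := by simp [c]

lemma c_pos (k : ℕ) : 0 < c k := by
  have : 0 < Nat.choose (2 * k) k := Nat.choose_pos (by omega)
  unfold c
  positivity

lemma c_succ (k : ℕ) : ((k : ℝ) + 1) * c (k + 1) = (k + 1 / 2) * c k := by
  have h := Nat.succ_mul_centralBinom_succ k
  simp only [Nat.centralBinom] at h
  have h' : ((k : ℝ) + 1) * (Nat.choose (2 * (k + 1)) (k + 1) : ℝ)
      = 2 * (2 * k + 1) * (Nat.choose (2 * k) k : ℝ) := by exact_mod_cast h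
  unfold c
  rw [mul_div_assoc', h', pow_succ]
  field_simp
  ring

/-- A quantitative form of `c(k) = O(k^(-1/2))` that is stable under induction. -/
lemma c_sq_le (k : ℕ) : c k ^ 2 ≤ 1 / (2 * k + 1) := by
  induction k with
  | zero => simp [c_zero]
  | succ k ih =>
    have h : c (k + 1) = (k + 1 / 2) / (k + 1) * c k := by
      field_simp
      linear_combination 2 * c_succ k
    rw [h, mul_pow]
    calc (((k : ℝ) + 1 / 2) / (k + 1)) ^ 2 * c k ^ 2
        ≤ (((k : ℝ) + 1 / 2) / (k + 1)) ^ 2 * (1 / (2 * k + 1)) := by gcongr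
      _ ≤ 1 / (2 * ((k + 1 : ℕ) : ℝ) + 1) := by
        push_cast
        rw [div_pow, div_mul_div_comm, div_le_div_iff₀ (by positivity) (by positivity)]
        have : (0 : ℝ) ≤ k := k.cast_nonneg
        nlinarith

lemma c_le_one (k : ℕ) : c k ≤ 1 := by
  have h : c k ^ 2 ≤ 1 := (c_sq_le k).trans <| by
    rw [div_le_one (by positivity)]
    have : (0 : ℝ) ≤ k := k.cast_nonneg
    linarith
  exact (sq_le_one_iff₀ (c_pos k).le).1 h

lemma tendsto_c : Tendsto c atTop (𝓝 0) := by
  have h : Tendsto (fun k => c k ^ 2) atTop (𝓝 0) := by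
    refine squeeze_zero (fun k => sq_nonneg _) (fun k => (c_sq_le k).trans ?_)
      tendsto_one_div_add_atTop_nhds_zero_nat
    have : (0 : ℝ) ≤ k := k.cast_nonneg
    gcongr
    linarith
  have h2 := h.sqrt
  simp only [Real.sqrt_zero, Real.sqrt_sq (c_pos _).le] at h2
  exact h2

/-- `∑ c(k)/(k+1)` telescopes, because `c(k)/(k+1) = 2 (c(k) - c(k+1))`. -/
lemma hasSum_c_div_succ : HasSum (fun k : ℕ => c k / ((k : ℝ) + 1)) 2 := by
  rw [hasSum_iff_tendsto_nat_of_nonneg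
    (fun k => div_nonneg (c_pos k).le (by positivity))]
  have h : ∀ n, ∑ k ∈ Finset.range n, c k / ((k : ℝ) + 1) = 2 * (1 - c n) := by
    intro n
    induction n with
    | zero => simp [c_zero]
    | succ n ih =>
      rw [Finset.sum_range_succ, ih]
      field_simp
      linear_combination 2 * c_succ n
  simp_rw [h]
  simpa using (tendsto_c.const_sub 1).const_mul 2

/-! ### The series `F` and `H` and their termwise derivatives -/

/-- The Dirichlet-type series `F p s = ∑ c(k)/(k+s)^p`; the case `p = 1` is the Beta function
`B(s, 1/2)`, and the higher `p` are its derivatives up to constants. -/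
noncomputable def F (p : ℕ) (s : ℝ) : ℝ := ∑' k : ℕ, c k / ((k : ℝ) + s) ^ p

/-- `H p s = ∑ (1/(n+s)^p - 1/(n+s+1/2)^p)`; the case `p = 1` is the difference of digamma values
`ψ(s+1/2) - ψ(s)`. -/
noncomputable def H (p : ℕ) (s : ℝ) : ℝ :=
  ∑' n : ℕ, (1 / ((n : ℝ) + s) ^ p - 1 / ((n : ℝ) + s + 1 / 2) ^ p)

lemma summable_shift {s : ℝ} (hs : 0 < s) {p : ℕ} (hp : 2 ≤ p) :
    Summable (fun n : ℕ => 1 / ((n : ℝ) + s) ^ p) := by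
  have h := (Real.summable_one_div_nat_add_rpow s p).2 (by exact_mod_cast hp)
  refine h.congr fun n => ?_
  rw [Real.rpow_natCast, abs_of_pos (by positivity)]

lemma summable_F_one {s : ℝ} (hs : 0 < s) :
    Summable (fun k : ℕ => c k / ((k : ℝ) + s) ^ 1) := by
  refine Summable.of_nonneg_of_le (fun k => div_nonneg (c_pos k).le (by positivity)) (fun k => ?_)
    (hasSum_c_div_succ.summable.mul_left (1 / s + 1))
  have := (c_pos k).le
  rw [pow_one, mul_div_assoc', div_le_div_iff₀ (by positivity) (by positivity), mul_right_comm,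
    mul_comm]
  gcongr
  have : (1 / s + 1) * ((k : ℝ) + s) = k / s + k + 1 + s := by field_simp; ring
  have : 0 ≤ (k : ℝ) / s := by positivity
  linarith

lemma summable_F {s : ℝ} (hs : 0 < s) {p : ℕ} (hp : 1 ≤ p) :
    Summable (fun k : ℕ => c k / ((k : ℝ) + s) ^ p) := by
  rcases hp.eq_or_lt with rfl | hp
  · exact summable_F_one hs
  · refine Summable.of_nonneg_of_le (fun k => div_nonneg (c_pos k).le (by positivity))
      (fun k => ?_) (summable_shift hs hp)
    gcongr
    exact c_le_one k

/-- Termwise differentiation of `∑ (a(k)/(k+s)^p - b(k)/(k+s+1/2)^p)` for bounded coefficients;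
`b = 0` covers `F` and `a = b = 1` covers `H`. -/
lemma hasDerivAt_series {a b : ℕ → ℝ} (ha : ∀ k, |a k| ≤ 1) (hb : ∀ k, |b k| ≤ 1)
    {p : ℕ} (hp : 1 ≤ p) {s : ℝ} (hs : 0 < s)
    (hsum : Summable fun k : ℕ => a k / ((k : ℝ) + s) ^ p - b k / ((k : ℝ) + s + 1 / 2) ^ p) :
    HasDerivAt (fun x => ∑' k : ℕ, (a k / ((k : ℝ) + x) ^ p - b k / ((k : ℝ) + x + 1 / 2) ^ p))
      (-p * ∑' k : ℕ, (a k / ((k : ℝ) + s) ^ (p + 1) - b k / ((k : ℝ) + s + 1 / 2) ^ (p + 1))) s := by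
  -- Terms are dominated uniformly on `(s/2, ∞)` by their values at `s/2`.
  have hs2 : 0 < s / 2 := by positivity
  have hmem : s ∈ Set.Ioi (s / 2) := by simp only [Set.mem_Ioi]; linarith
  rw [← tsum_mul_left]
  have hu : Summable fun k : ℕ => (p : ℝ) * (1 / ((k : ℝ) + s / 2) ^ (p + 1) * 2) :=
    ((summable_shift hs2 (by omega)).mul_right 2).mul_left _
  have key : ∀ (e y : ℝ), 0 < y → HasDerivAt (fun x => e / x ^ p) (-p * (e / y ^ (p + 1))) y := by
    intro e y hy
    have h := (hasDerivAt_const y e).div (hasDerivAt_pow p y) (by positivity)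
    refine h.congr_deriv ?_
    obtain ⟨q, rfl⟩ : ∃ q, p = q + 1 := ⟨p - 1, by omega⟩
    field_simp
    simp
    ring
  refine hasDerivAt_tsum_of_isPreconnected
    (g := fun (k : ℕ) x => a k / ((k : ℝ) + x) ^ p - b k / ((k : ℝ) + x + 1 / 2) ^ p)
    (g' := fun (k : ℕ) x =>
      -p * (a k / ((k : ℝ) + x) ^ (p + 1) - b k / ((k : ℝ) + x + 1 / 2) ^ (p + 1)))
    hu isOpen_Ioi isPreconnected_Ioi ?_ ?_ hmem hsum hmem
  · intro k y hy
    have hy0 : 0 < y := hs2.trans hy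
    have h1 := (key (a k) (k + y) (by positivity)).comp_const_add (k : ℝ) y
    have h2 := (key (b k) (k + y + 1 / 2) (by positivity)).comp_add_const ((k : ℝ) + y) (1 / 2)
    have h3 := h2.comp_const_add (k : ℝ) y
    refine (h1.sub h3).congr_deriv ?_
    ring
  · intro k y hy
    have hy0 : 0 < y := hs2.trans hy
    have hy' : s / 2 ≤ y := le_of_lt hy
    rw [norm_mul, norm_neg, Real.norm_natCast]
    gcongr
    refine (norm_sub_le _ _).trans ?_
    rw [mul_two]
    have aux : ∀ e z : ℝ, |e| ≤ 1 → (k : ℝ) + s / 2 ≤ z →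
        ‖e / z ^ (p + 1)‖ ≤ 1 / ((k : ℝ) + s / 2) ^ (p + 1) := by
      intro e z he hz
      have : 0 < (k : ℝ) + s / 2 := by positivity
      rw [norm_div, norm_pow, Real.norm_eq_abs, Real.norm_eq_abs, abs_of_pos (this.trans_le hz)]
      gcongr
    exact add_le_add (aux _ _ (ha k) (by linarith)) (aux _ _ (hb k) (by linarith))

lemma hasDerivAt_F {p : ℕ} (hp : 1 ≤ p) {s : ℝ} (hs : 0 < s) :
    HasDerivAt (F p) (-p * F (p + 1) s) s := by
  have h := hasDerivAt_series (a := c) (b := fun _ => 0)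
    (fun k => by rw [abs_of_pos (c_pos k)]; exact c_le_one k) (by simp) hp hs
    (by simpa using summable_F hs hp)
  simpa [F, funext (fun x => show F p x = ∑' k : ℕ, c k / ((k : ℝ) + x) ^ p from rfl)] using h

/-! ### The functional equation and the logarithmic derivative of `F 1` -/

lemma F_one_pos {s : ℝ} (hs : 0 < s) : 0 < F 1 s := by
  refine (summable_F hs le_rfl).tsum_pos (fun k => ?_) 0 ?_
  · have := c_pos k; positivity
  · have := c_pos 0; positivity

/-- The functional equation of `B(s, 1/2)`. The difference of the two series telescopes, with
`k c(k)/(k+s)` as the primitive. -/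
lemma F_one_step {s : ℝ} (hs : 0 < s) : s * F 1 s = (s + 1 / 2) * F 1 (s + 1) := by
  have hs1 : 0 < s + 1 := by positivity
  have h := (((summable_F hs le_rfl).hasSum.mul_left s).sub
    ((summable_F hs1 le_rfl).hasSum.mul_left (s + 1 / 2))).tendsto_sum_nat
  have hsum : ∀ n : ℕ, ∑ k ∈ Finset.range n,
      (s * (c k / ((k : ℝ) + s) ^ 1) - (s + 1 / 2) * (c k / ((k : ℝ) + (s + 1)) ^ 1))
      = n * c n / (n + s) := by
    intro n
    induction n with
    | zero => simp
    | succ n ih =>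
      rw [Finset.sum_range_succ, ih]
      push_cast
      rw [c_succ, pow_one, pow_one]
      field_simp
      ring
  simp_rw [hsum] at h
  have h0 : Tendsto (fun n : ℕ => n * c n / (n + s)) atTop (𝓝 0) := by
    refine squeeze_zero (fun n => ?_) (fun n => ?_) tendsto_c
    · have := c_pos n; positivity
    · have := c_pos n
      rw [div_le_iff₀ (by positivity)]
      nlinarith
  have := tendsto_nhds_unique h h0
  have h' : s * F 1 s - (s + 1 / 2) * F 1 (s + 1) = 0 := this
  linarith

lemma F_two_nonneg {s : ℝ} (hs : 0 < s) : 0 ≤ F 2 s :=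
  tsum_nonneg fun k => by have := c_pos k; positivity

lemma F_two_le {s : ℝ} (hs : 0 < s) : F 2 s ≤ F 1 s * (1 / s) := by
  rw [F, F, ← tsum_mul_right]
  refine (summable_F hs (by norm_num)).tsum_le_tsum (fun k => ?_)
    ((summable_F hs le_rfl).mul_right _)
  have := c_pos k
  rw [pow_one, pow_two, ← div_div, div_eq_mul_one_div (c k / (k + s))]
  have : (0 : ℝ) ≤ k := k.cast_nonneg
  gcongr
  linarith

/-- The logarithmic derivative of the functional equation `F_one_step`. -/
lemma ratio_step {s : ℝ} (hs : 0 < s) :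
    F 2 s / F 1 s - F 2 (s + 1) / F 1 (s + 1) = 1 / s - 1 / (s + 1 / 2) := by
  have hs1 : 0 < s + 1 := by positivity
  have hd1 := (hasDerivAt_id s).mul (hasDerivAt_F le_rfl hs)
  have hd2 := ((hasDerivAt_id s).add_const (1 / 2 : ℝ)).mul
    ((hasDerivAt_F le_rfl hs1).comp_add_const s 1)
  have heq : (fun x => x * F 1 x) =ᶠ[𝓝 s] fun x => (x + 1 / 2) * F 1 (x + 1) := by
    filter_upwards [Ioi_mem_nhds hs] with x hx using F_one_step hx
  have h := (hd1.congr_of_eventuallyEq heq.symm).unique hd2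
  simp only [id, Nat.cast_one] at h
  have hp1 := F_one_pos hs
  have hp2 := F_one_pos hs1
  have hst := F_one_step hs
  have e : F 1 s = (s + 1 / 2) * F 1 (s + 1) / s := by field_simp; linarith
  have e2 : F 2 s = (F 1 s - F 1 (s + 1) + (s + 1 / 2) * F 2 (s + 1)) / s := by
    field_simp
    norm_num at h
    linarith
  rw [e2, e]
  field_simp
  ring

/-- `-(d/ds) log B(s, 1/2) = ψ(s+1/2) - ψ(s)` as a convergent series: `ratio_step` telescopes, and
the remainder satisfies `0 ≤ F 2 (s+N) / F 1 (s+N) ≤ 1/(s+N)`. -/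
lemma hasSum_H_one {s : ℝ} (hs : 0 < s) :
    HasSum (fun n : ℕ => 1 / ((n : ℝ) + s) ^ 1 - 1 / ((n : ℝ) + s + 1 / 2) ^ 1)
      (F 2 s / F 1 s) := by
  rw [hasSum_iff_tendsto_nat_of_nonneg]
  · have hsum : ∀ N : ℕ, ∑ n ∈ Finset.range N,
        (1 / ((n : ℝ) + s) ^ 1 - 1 / ((n : ℝ) + s + 1 / 2) ^ 1)
        = F 2 s / F 1 s - F 2 (N + s) / F 1 (N + s) := by
      intro N
      induction N with
      | zero => simp
      | succ N ih =>
        have h := ratio_step (s := N + s) (by positivity)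
        rw [Finset.sum_range_succ, ih]
        push_cast
        rw [show (N : ℝ) + 1 + s = N + s + 1 by ring, pow_one, pow_one]
        linarith
    simp_rw [hsum]
    have h0 : Tendsto (fun N : ℕ => F 2 (N + s) / F 1 (N + s)) atTop (𝓝 0) := by
      refine squeeze_zero (g := fun N : ℕ => 1 / ((N : ℝ) + s)) (fun N => ?_) (fun N => ?_) ?_
      · exact div_nonneg (F_two_nonneg (by positivity)) (F_one_pos (by positivity)).le
      · rw [div_le_iff₀ (F_one_pos (by positivity)), mul_comm]
        exact F_two_le (by positivity)
      · simp only [one_div]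
        exact tendsto_inv_atTop_zero.comp
          (tendsto_atTop_add_const_right _ _ tendsto_natCast_atTop_atTop)
    simpa using h0.const_sub (F 2 s / F 1 s)
  · intro n
    rw [sub_nonneg, pow_one, pow_one]
    exact one_div_le_one_div_of_le (by positivity) (by linarith)

/-- `f' = -f · H 1` for `f = B(s, 1/2)`, written with `f' = -F 2`. -/
lemma F_two_eq {s : ℝ} (hs : 0 < s) : F 2 s = F 1 s * H 1 s := by
  rw [H, (hasSum_H_one hs).tsum_eq, mul_div_cancel₀ _ (F_one_pos hs).ne']

lemma summable_H {s : ℝ} (hs : 0 < s) {p : ℕ} (hp : 1 ≤ p) :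
    Summable (fun n : ℕ => 1 / ((n : ℝ) + s) ^ p - 1 / ((n : ℝ) + s + 1 / 2) ^ p) := by
  rcases hp.eq_or_lt with rfl | hp
  · exact (hasSum_H_one hs).summable
  · simp_rw [add_assoc]
    exact (summable_shift hs hp).sub (summable_shift (by positivity) hp)

lemma hasDerivAt_H {p : ℕ} (hp : 1 ≤ p) {s : ℝ} (hs : 0 < s) :
    HasDerivAt (H p) (-p * H (p + 1) s) s :=
  hasDerivAt_series (a := fun _ => 1) (b := fun _ => 1) (by simp) (by simp) hp hs
    (summable_H hs hp)

/-- The derivative of the identity `F 2 = F 1 * H 1`, which holds on the whole half-line. -/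
lemma F_three_eq {s : ℝ} (hs : 0 < s) : 2 * F 3 s = F 2 s * H 1 s + F 1 s * H 2 s := by
  have hd := (hasDerivAt_F le_rfl hs).mul (hasDerivAt_H le_rfl hs)
  have heq : F 2 =ᶠ[𝓝 s] F 1 * H 1 := by
    filter_upwards [Ioi_mem_nhds hs] with x hx using F_two_eq hx
  have h := (hasDerivAt_F (p := 2) (by norm_num) hs).unique (hd.congr_of_eventuallyEq heq)
  norm_num at h
  linarith

/-- The derivative of the identity `F_three_eq`. -/
lemma F_four_eq {s : ℝ} (hs : 0 < s) :
    6 * F 4 s = 2 * F 3 s * H 1 s + 2 * F 2 s * H 2 s + 2 * F 1 s * H 3 s := by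
  have hd := ((hasDerivAt_F (p := 2) (by norm_num) hs).mul (hasDerivAt_H le_rfl hs)).add
    ((hasDerivAt_F le_rfl hs).mul (hasDerivAt_H (p := 2) (by norm_num) hs))
  have heq : (fun x => 2 * F 3 x) =ᶠ[𝓝 s] F 2 * H 1 + F 1 * H 2 := by
    filter_upwards [Ioi_mem_nhds hs] with x hx using F_three_eq hx
  have h := ((hasDerivAt_F (p := 3) (by norm_num) hs).const_mul 2).unique
    (hd.congr_of_eventuallyEq heq)
  norm_num at h
  linarith

/-! ### Values at `s = 1/2` -/

lemma F_one_anti {s t : ℝ} (hs : 0 < s) (hst : s ≤ t) : F 1 t ≤ F 1 s := by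
  refine (summable_F (hs.trans_le hst) le_rfl).tsum_le_tsum (fun k => ?_) (summable_F hs le_rfl)
  have := c_pos k
  gcongr

lemma F_one_one : F 1 1 = 2 := by
  simpa [F] using hasSum_c_div_succ.tsum_eq

/-- `B(1/2, 1/2) = π`: iterating the functional equation from `1/2` and from `1` turns the quotient
`F 1 (1/2) / F 1 1` into the Wallis product, up to a factor that monotonicity squeezes to `1`. -/
lemma F_one_half : F 1 (1 / 2) = Real.pi := by
  have hW : ∀ N : ℕ, F 1 (N + 1 / 2) / F 1 (N + 1) * Real.Wallis.W N = F 1 (1 / 2) / 2 := by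
    intro N
    induction N with
    | zero => simp [Real.Wallis.W, F_one_one]
    | succ N ih =>
      rw [← ih, Real.Wallis.W_succ]
      have h1 := F_one_step (s := N + 1 / 2) (by positivity)
      have h2 := F_one_step (s := N + 1) (by positivity)
      have p1 := F_one_pos (s := (N : ℝ) + 1) (by positivity)
      have p2 := F_one_pos (s := (N : ℝ) + 1 + 1) (by positivity)
      push_cast
      rw [show (N : ℝ) + 1 / 2 + 1 = N + 1 + 1 / 2 by ring] at h1
      have e1 : F 1 ((N : ℝ) + 1 / 2) = (N + 1) * F 1 (N + 1 + 1 / 2) / (N + 1 / 2) := by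
        rw [eq_div_iff (by positivity)]
        linarith
      have e2 : F 1 ((N : ℝ) + 1) = (N + 1 + 1 / 2) * F 1 (N + 1 + 1) / (N + 1) := by
        rw [eq_div_iff (by positivity)]
        linarith
      rw [e1, e2]
      field_simp
      ring
  have hq : Tendsto (fun N : ℕ => F 1 (N + 1 / 2) / F 1 (N + 1)) atTop (𝓝 1) := by
    have hg : Tendsto (fun N : ℕ => 1 + 1 / ((N : ℝ) + 1) ) atTop (𝓝 1) := by
      simpa using (tendsto_one_div_add_atTop_nhds_zero_nat (𝕜 := ℝ)).const_add 1
    refine tendsto_of_tendsto_of_tendsto_of_le_of_le' tendsto_const_nhds hg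
      (Eventually.of_forall fun N => ?_) ?_
    · rw [le_div_iff₀ (F_one_pos (by positivity)), one_mul]
      exact F_one_anti (by positivity) (by linarith)
    · filter_upwards [eventually_ge_atTop 1] with N hN
      have hN' : (1 : ℝ) ≤ N := by exact_mod_cast hN
      have h1 := F_one_step (s := N + 1 / 2) (by positivity)
      have h2 := F_one_anti (s := N + 1) (t := N + 1 / 2 + 1) (by positivity) (by linarith)
      have p1 := F_one_pos (s := (N : ℝ) + 1) (by positivity)
      rw [div_le_iff₀ p1]
      -- `F(N+1/2) = (N+1)/(N+1/2) F(N+3/2) ≤ (N+1)/(N+1/2) F(N+1)`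
      have h3 : F 1 ((N : ℝ) + 1 / 2) ≤ (N + 1) / (N + 1 / 2) * F 1 (N + 1) := by
        rw [div_mul_eq_mul_div, le_div_iff₀ (by positivity)]
        nlinarith
      refine h3.trans ?_
      gcongr
      rw [div_le_iff₀ (by positivity)]
      field_simp
      nlinarith
  have h := hq.mul Real.Wallis.tendsto_W_nhds_pi_div_two
  simp_rw [hW] at h
  have := tendsto_nhds_unique h tendsto_const_nhds
  linarith

/-- Splitting `ζ(p)` into odd and even denominators gives `∑ 1/(n+1/2)^p = (2^p - 1) ζ(p)`, and
`H p (1/2)` is this minus `ζ(p)`. -/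
lemma H_half {p : ℕ} (hp : 2 ≤ p) : H p (1 / 2) = (2 ^ p - 2) * zetaVal p := by
  have h1 := summable_shift (s := 1) one_pos hp
  have h2 := summable_shift (s := 1 / 2) (by norm_num) hp
  have he : ∀ n : ℕ, 1 / (((2 * n : ℕ) : ℝ) + 1) ^ p = 1 / 2 ^ p * (1 / ((n : ℝ) + 1 / 2) ^ p) := by
    intro n
    rw [div_mul_div_comm, ← mul_pow]
    push_cast
    ring_nf
  have ho : ∀ n : ℕ, 1 / (((2 * n + 1 : ℕ) : ℝ) + 1) ^ p = 1 / 2 ^ p * (1 / ((n : ℝ) + 1) ^ p) := by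
    intro n
    rw [div_mul_div_comm, ← mul_pow]
    push_cast
    ring_nf
  have h := tsum_even_add_odd (f := fun n : ℕ => 1 / ((n : ℝ) + 1) ^ p)
    (by simp_rw [he]; exact h2.mul_left _) (by simp_rw [ho]; exact h1.mul_left _)
  simp_rw [he, ho] at h
  rw [tsum_mul_left, tsum_mul_left] at h
  have hH : H p (1 / 2) = ∑' n : ℕ, 1 / ((n : ℝ) + 1 / 2) ^ p - zetaVal p := by
    rw [zetaVal, ← h2.tsum_sub h1, H]
    refine tsum_congr fun n => ?_
    rw [add_assoc]
    norm_num
  have h' : 1 / 2 ^ p * ∑' n : ℕ, 1 / ((n : ℝ) + 1 / 2) ^ p + 1 / 2 ^ p * zetaVal p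
      = zetaVal p := h
  have h2p : (2 : ℝ) ^ p * (1 / 2 ^ p) = 1 := mul_one_div_cancel (by positivity)
  rw [hH]
  linear_combination (2 : ℝ) ^ p * h'
    - (∑' n : ℕ, 1 / ((n : ℝ) + 1 / 2) ^ p + zetaVal p) * h2p

/-- The partial sums of `H 1 (1/2)` are `2 (h(2N) - h(N))` with `h` the harmonic numbers, so they
tend to `2 log 2`. -/
lemma H_one_half : H 1 (1 / 2) = Real.log 4 := by
  have h := (summable_H (s := 1 / 2) (by norm_num) le_rfl).hasSum.tendsto_sum_nat
  have hsum : ∀ N : ℕ, ∑ n ∈ Finset.range N,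
      (1 / ((n : ℝ) + 1 / 2) ^ 1 - 1 / ((n : ℝ) + 1 / 2 + 1 / 2) ^ 1)
      = 2 * ((harmonic (2 * N) : ℝ) - harmonic N) := by
    intro N
    induction N with
    | zero => simp
    | succ N ih =>
      rw [Finset.sum_range_succ, ih, show 2 * (N + 1) = 2 * N + 1 + 1 by ring, harmonic_succ,
        harmonic_succ, harmonic_succ]
      push_cast
      field_simp
      ring
  simp_rw [hsum] at h
  have hlim := Real.tendsto_harmonic_sub_log
  have hlim2 := hlim.comp (tendsto_id.const_mul_atTop' (two_pos : 0 < 2))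
  have h2 := ((hlim2.sub hlim).add_const (Real.log 2)).const_mul 2
  have := tendsto_nhds_unique_of_eventuallyEq h h2 <| by
    filter_upwards [eventually_ge_atTop 1] with N hN
    have : (N : ℝ) ≠ 0 := by positivity
    simp only [Function.comp_apply, id]
    push_cast
    rw [Real.log_mul two_ne_zero this]
    ring
  rw [H, this, show (4 : ℝ) = 2 ^ 2 by norm_num, Real.log_pow]
  push_cast
  ring

/-- The series `∑_{k=0}^∞ c(k)/(k + 1/2)⁴` converges and equals
`π·(2ζ(3) + ζ(2)·log 4 + (1/6)(log 4)³)`; i.e. `γ̃₃ = (1/π)·∑_{k=0}^∞ c(k)/(k + 1/2)⁴`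
equals `2ζ(3) + ζ(2)·log 4 + (1/6)(log 4)³`. -/
theorem gamma_tilde_three :
    HasSum (fun k : ℕ => c k / ((k : ℝ) + 1 / 2) ^ 4)
      (Real.pi * (2 * zetaVal 3 + zetaVal 2 * Real.log 4 + (1 / 6) * (Real.log 4) ^ 3)) ∧
    (1 / Real.pi) * ∑' k : ℕ, c k / ((k : ℝ) + 1 / 2) ^ 4
      = 2 * zetaVal 3 + zetaVal 2 * Real.log 4 + (1 / 6) * (Real.log 4) ^ 3 := by
  have hF : F 4 (1 / 2)
      = Real.pi * (2 * zetaVal 3 + zetaVal 2 * Real.log 4 + (1 / 6) * (Real.log 4) ^ 3) := by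
    have hs : (0 : ℝ) < 1 / 2 := by norm_num
    have h4 := F_four_eq hs
    rw [F_three_eq hs, F_two_eq hs, F_one_half, H_one_half, H_half le_rfl,
      H_half (p := 3) (by norm_num)] at h4
    linear_combination h4 / 6
  have h : HasSum (fun k : ℕ => c k / ((k : ℝ) + 1 / 2) ^ 4)
      (Real.pi * (2 * zetaVal 3 + zetaVal 2 * Real.log 4 + (1 / 6) * (Real.log 4) ^ 3)) := by
    rw [← hF]
    exact (summable_F (by norm_num) (by norm_num)).hasSum
  refine ⟨h, ?_⟩
  rw [h.tsum_eq]
  field_simp
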